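/- Let σ be the α-approximate adaptive greedy policy and let π* be an adaptive covering policy of minimum expected cost. If the utility function f is integer-valued, then E[C(σ)] ≤ α·H(Q)·E[C(π*)], where H(Q) = Σ_{j=1}^{Q} 1/j is the Q-th harmonic number. -/

import Mathlib

/-!
Common framework for the Stochastic Submodular Cover problem
(Hellerstein–Kletenik–Parthasarathy, "A Tight Bound for Stochastic Submodular Cover").
-/

namespace SSC

open Finset
open scoped Classical

noncomputable section

variable {E O : Type*}

/-- A subrealization assigns to each item either a state or `none` (unassigned).
A realization corresponds to the case where every item is assigned. -/
abbrev Sub (E O : Type*) := E → Option O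

/-- `subext ψ ψ'` means `ψ ⊆ ψ'` as partial assignments of states to items. -/
def subext (ψ ψ' : Sub E O) : Prop := ∀ e o, ψ e = some o → ψ' e = some o

/-- `ssubext ψ ψ'` means `ψ ⊂ ψ'` (strict extension). -/
def ssubext (ψ ψ' : Sub E O) : Prop := subext ψ ψ' ∧ ψ ≠ ψ'

/-- Extend a subrealization `ψ` by assigning state `o` to item `e`. -/
def updateSub [DecidableEq E] (ψ : Sub E O) (e : E) (o : O) : Sub E O :=
  fun e' => if e' = e then some o else ψ e'

/-- View a (full) realization as a subrealization. -/
def toSub (φ : E → O) : Sub E O := fun e => some (φ e)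

variable [Fintype E] [DecidableEq E] [Fintype O] [DecidableEq O]

/-- An instance of the Stochastic Submodular Cover problem: positive item costs `c`,
a probability mass function `p` on realizations with mutually independent item states,
and a utility function `f` on subrealizations which is zero on the empty subrealization,
nonnegative, monotone and submodular (pointwise polymatroid), and equal to the goal
value `Q > 0` on every full realization (coverability). -/
structure Problem (E O : Type*) [Fintype E] [DecidableEq E] [Fintype O] [DecidableEq O] where
  c : E → ℝ
  c_pos : ∀ e, 0 < c e
  p : (E → O) → ℝ
  p_nonneg : ∀ φ, 0 ≤ p φ
  p_sum : ∑ φ : E → O, p φ = 1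
  indep : ∀ φ : E → O, p φ = ∏ e : E, ∑ φ' : E → O, if φ' e = φ e then p φ' else 0
  f : Sub E O → ℝ
  f_nonneg : ∀ ψ, 0 ≤ f ψ
  f_empty : f (fun _ => none) = 0
  f_mono : ∀ ψ ψ' : Sub E O, subext ψ ψ' → f ψ ≤ f ψ'
  f_submod : ∀ (ψ ψ' : Sub E O) (e : E) (o : O), subext ψ ψ' → ψ' e = none →
      f (updateSub ψ' e o) - f ψ' ≤ f (updateSub ψ e o) - f ψ
  Q : ℝ
  Q_pos : 0 < Q
  f_cover : ∀ φ : E → O, f (toSub φ) = Q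

variable (M : Problem E O)

/-- Expectation of a random variable `X` with respect to the random realization `Φ`. -/
def Ex (X : (E → O) → ℝ) : ℝ := ∑ φ : E → O, M.p φ * X φ

/-- Probability of an event `A` of the random realization `Φ`. -/
def Pr (A : (E → O) → Prop) : ℝ := ∑ φ : E → O, if A φ then M.p φ else 0

/-- Conditional expectation `E[X | A]`. -/
def cEx (X : (E → O) → ℝ) (A : (E → O) → Prop) : ℝ :=
  (∑ φ : E → O, if A φ then M.p φ * X φ else 0) / Pr M A

/-- The random marginal increase in utility `F_ψ(e)` from observing the state of `e`. -/
def Fm (ψ : Sub E O) (e : E) (φ : E → O) : ℝ := M.f (updateSub ψ e (φ e)) - M.f ψ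

/-- The unit price `υ(e|ψ) = c(e) / E[F_ψ(e)]`. -/
def price (ψ : Sub E O) (e : E) : ℝ := M.c e / Ex M (Fm M ψ e)

/-- An adaptive covering policy: at every subrealization `ψ` with `f ψ < Q` it selects an
item outside `dom ψ`. -/
def IsPolicy (π : Sub E O → E) : Prop := ∀ ψ : Sub E O, M.f ψ < M.Q → ψ (π ψ) = none

/-- The `α`-approximate adaptive greedy policy: at every `ψ` with `f ψ < Q` the unit price of
the selected item `σ ψ` is at most `α` times the minimum unit price, i.e.
`υ(σ ψ | ψ) ≤ α · υ(e | ψ)` for every `e ∉ dom ψ`, written multiplicatively so that infinite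
unit prices (zero expected marginal utility) are handled correctly. -/
def IsGreedy (α : ℝ) (σ : Sub E O → E) : Prop :=
  IsPolicy M σ ∧
    ∀ ψ : Sub E O, M.f ψ < M.Q → ∀ e : E, ψ e = none →
      M.c (σ ψ) * Ex M (Fm M ψ e) ≤ α * M.c e * Ex M (Fm M ψ (σ ψ))

/-- One step of executing policy `π` on realization `φ`. -/
def stepPol (π : Sub E O → E) (φ : E → O) (ψ : Sub E O) : Sub E O :=
  if M.f ψ < M.Q then updateSub ψ (π ψ) (φ (π ψ)) else ψ

/-- The subrealization reached after `n` steps of executing `π` on `φ`. -/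
def execAux (π : Sub E O → E) (φ : E → O) : ℕ → Sub E O
  | 0 => fun _ => none
  | n + 1 => stepPol M π φ (execAux π φ n)

/-- The cover `Ψ(π)` constructed by executing `π` on realization `φ`. -/
def cover (π : Sub E O → E) (φ : E → O) : Sub E O := execAux M π φ (Fintype.card E)

/-- `ψ` is visited when executing `π` on realization `φ`. -/
def visits (π : Sub E O → E) (φ : E → O) (ψ : Sub E O) : Prop := ∃ n, execAux M π φ n = ψ

/-- The set `S(π)` of items selected when executing `π` on `φ`. -/
def Ssel (π : Sub E O → E) (φ : E → O) : Finset E :=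
  Finset.univ.filter fun e => cover M π φ e ≠ none

/-- The cost `C(π)` incurred when executing `π` on `φ`. -/
def C (π : Sub E O → E) (φ : E → O) : ℝ := ∑ e ∈ Ssel M π φ, M.c e

/-- An adaptive covering policy of minimum expected cost. -/
def IsOptimal (π : Sub E O → E) : Prop :=
  IsPolicy M π ∧ ∀ π' : Sub E O → E, IsPolicy M π' → Ex M (C M π) ≤ Ex M (C M π')

/-- `N(π)`: the non-leaf nodes of the decision tree of `π` — subrealizations with
`f ψ < Q` that are visited with positive probability. -/
def Nnodes (π : Sub E O → E) : Finset (Sub E O) :=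
  Finset.univ.filter fun ψ => M.f ψ < M.Q ∧ 0 < Pr M fun φ => visits M π φ ψ

/-- The event `ψ ↝ i`, for a marker located at utility value `b = f(ρ_i)`:
`ψ` is the last subrealization visited by `σ` (on the given realization) whose
utility is at most `b`. -/
def leadsTo (σ : Sub E O → E) (b : ℝ) (ψ : Sub E O) (φ : E → O) : Prop :=
  visits M σ φ ψ ∧ M.f ψ ≤ b ∧
    ∀ ψ' : Sub E O, visits M σ φ ψ' → M.f ψ' ≤ b → subext ψ' ψ

/-- The revenue `λ_i = υ_ψ · ε_i` collected by `σ` from the marker located at utility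
value `b = f(ρ_i)` with interval length `εi`, where `ψ` is the unique subrealization
with `ψ ↝ i`. -/
def lam (σ : Sub E O → E) (b εi : ℝ) (φ : E → O) : ℝ :=
  ∑ ψ : Sub E O, if leadsTo M σ b ψ φ then price M ψ (σ ψ) * εi else 0

/-- The revenue `μ(e)` collected by the optimal policy `πs` from item `e`
(relative to the greedy policy `σ`, both executed on the same realization). -/
def mu (σ πs : Sub E O → E) (e : E) (φ : E → O) : ℝ :=
  if e ∈ Ssel M πs φ then
    if e ∈ Ssel M σ φ then
      ∑ ψ : Sub E O,
        if visits M σ φ ψ ∧ M.f ψ < M.Q ∧ σ ψ = e then price M ψ e * Fm M ψ e φ else 0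
    else M.c e
  else 0

/-- The total revenue `μ*` collected by the optimal policy. -/
def muStar (σ πs : Sub E O → E) (φ : E → O) : ℝ := ∑ e : E, mu M σ πs e φ

/-- Replay of the internal state of policy `πs` in the second stage of the hybrid policy:
starting from the empty subrealization, repeatedly query `πs`; an item whose state is
already recorded in `ψ'` is not re-selected, its recorded state being used instead. -/
def replayAux (πs : Sub E O → E) (ψ' : Sub E O) : ℕ → Sub E O
  | 0 => fun _ => none
  | n + 1 =>
    if M.f (replayAux πs ψ' n) < M.Q then
      match ψ' (πs (replayAux πs ψ' n)) with
      | some o => updateSub (replayAux πs ψ' n) (πs (replayAux πs ψ' n)) o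
      | none => replayAux πs ψ' n
    else replayAux πs ψ' n

/-- The hybrid policy `π^ψ0`: follow `σ` until `ψ0` is visited, then switch to executing
`πs` from the root of its tree, never re-selecting an item of `dom ψ0` and using the
state recorded in `ψ0` instead. -/
def hybrid (σ πs : Sub E O → E) (ψ0 : Sub E O) : Sub E O → E := fun ψ' =>
  if subext ψ0 ψ' then πs (replayAux M πs ψ' (Fintype.card E)) else σ ψ'

/-- `δ⁺_ψ0(e)`: the marginal utility obtained by the hybrid policy `π^ψ0` when it selects
`e` during its second stage, and `0` if `e` is not selected in the second stage. -/
def deltaPlus (σ πs : Sub E O → E) (ψ0 : Sub E O) (e : E) (φ : E → O) : ℝ :=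
  ∑ ψ' : Sub E O,
    if subext ψ0 ψ' ∧ visits M (hybrid M σ πs ψ0) φ ψ' ∧
        ssubext ψ' (cover M (hybrid M σ πs ψ0) φ) ∧ hybrid M σ πs ψ0 ψ' = e
    then Fm M ψ' e φ else 0

/-!
Place markers at the possible utility values `v 0 < v 1 < ⋯ < v m = Q`. At the marker at level `b`,
the greedy policy `σ` collects its unit price at the last node `ψ` of utility at most `b`, times the
gap to the next level. Since the utility gained in a step is the total gap crossed and the state
of an item is independent of the event that `σ` reaches a node at which that item is fresh, these
revenues add up to `C(σ)` in expectation.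

The policy `π` collects from each of its items `e` the cost `c(e)`, or `υ(e|ψ) F_ψ(e)` if `σ`
selects `e` at `ψ`; by the same independence the total again has expectation `E[C(π)]`. On the
event that `σ` crosses level `b` from `ψ`, submodularity forces the items of `π` to supply at least
`Q - b` utility on top of `ψ`. Each of them does so at a unit price at least `υ(σ ψ|ψ) / α`, where
independence fails only for `e = σ ψ`, the case in which `π` is paid in proportion to the actual
utility gain. So the revenue of `σ` at the marker is at most `α ε / (Q - b)` times `E[C(π)]`, where
`ε` is the gap, and summing over the markers of an integer-valued `f` gives `α H(Q)`.
-/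

section Subrealizations

variable {ι S : Type*}

theorem subext.refl (ψ : Sub ι S) : subext ψ ψ := fun _ _ h => h

theorem subext.trans {ψ ψ' ψ'' : Sub ι S} (h : subext ψ ψ') (h' : subext ψ' ψ'') :
    subext ψ ψ'' := fun e o he => h' e o (h e o he)

theorem subext.antisymm {ψ ψ' : Sub ι S} (h : subext ψ ψ') (h' : subext ψ' ψ) : ψ = ψ' :=
  funext fun e => Option.ext fun o => ⟨h e o, h' e o⟩

theorem subext.eq_none {ψ ψ' : Sub ι S} (h : subext ψ ψ') {e : ι} (he : ψ' e = none) :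
    ψ e = none :=
  Option.eq_none_iff_forall_not_mem.2 fun o ho => by simp [h e o ho] at he

theorem eq_some_of_subext_toSub {ψ : Sub ι S} {φ : ι → S} (h : subext ψ (toSub φ)) {e : ι}
    (he : ψ e ≠ none) : ψ e = some (φ e) := by
  obtain ⟨o, ho⟩ := Option.ne_none_iff_exists'.1 he
  rw [ho]
  exact (h e o ho).symm

theorem exists_subext_toSub (ψ : Sub ι S) (φ : ι → S) :
    ∃ φ' : ι → S, subext ψ (toSub φ') ∧ ∀ e, ψ e = none → φ' e = φ e :=
  ⟨fun e => (ψ e).getD (φ e), fun e o h => by simp [toSub, h], fun e h => by simp [h]⟩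

variable [DecidableEq ι]

@[simp]
theorem updateSub_self (ψ : Sub ι S) (e : ι) (o : S) : updateSub ψ e o e = some o :=
  if_pos rfl

theorem updateSub_of_ne {e e' : ι} (h : e' ≠ e) (ψ : Sub ι S) (o : S) :
    updateSub ψ e o e' = ψ e' :=
  if_neg h

theorem updateSub_eq_self {ψ : Sub ι S} {e : ι} {o : S} (h : ψ e = some o) :
    updateSub ψ e o = ψ := by
  funext e'
  by_cases he : e' = e
  · rw [he, updateSub_self, h]
  · exact updateSub_of_ne he ψ o

theorem subext_updateSub {ψ : Sub ι S} {e : ι} (h : ψ e = none) (o : S) :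
    subext ψ (updateSub ψ e o) := by
  intro e' o' he'
  have hne : e' ≠ e := by
    rintro rfl
    simp [h] at he'
  rwa [updateSub_of_ne hne]

theorem updateSub_subext {ψ ψ' : Sub ι S} {e : ι} {o : S} (h : subext ψ ψ')
    (he : ψ' e = some o) : subext (updateSub ψ e o) ψ' := by
  intro e' o' he'
  by_cases hne : e' = e
  · rw [hne, updateSub_self] at he'
    rw [hne, he, he']
  · exact h e' o' (updateSub_of_ne hne ψ o ▸ he')

theorem subext_toSub_update {ψ : Sub ι S} {φ : ι → S} {e : ι} (h : subext ψ (toSub φ))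
    (he : ψ e = none) (o : S) : subext ψ (toSub (Function.update φ e o)) := by
  intro e' o' he'
  have hne : e' ≠ e := by
    rintro rfl
    simp [he] at he'
  simpa only [toSub, Function.update_of_ne hne] using h e' o' he'

end Subrealizations

section Expectation

variable {M}

theorem Ex_mono {X Y : (E → O) → ℝ} (h : ∀ φ, X φ ≤ Y φ) : Ex M X ≤ Ex M Y :=
  Finset.sum_le_sum fun φ _ => mul_le_mul_of_nonneg_left (h φ) (M.p_nonneg φ)

theorem Ex_nonneg {X : (E → O) → ℝ} (h : ∀ φ, 0 ≤ X φ) : 0 ≤ Ex M X :=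
  Finset.sum_nonneg fun φ _ => mul_nonneg (M.p_nonneg φ) (h φ)

variable (M)

@[simp]
theorem Ex_const (a : ℝ) : Ex M (fun _ => a) = a := by
  rw [Ex, ← Finset.sum_mul, M.p_sum, one_mul]

theorem Ex_add (X Y : (E → O) → ℝ) : Ex M (fun φ => X φ + Y φ) = Ex M X + Ex M Y := by
  simp only [Ex, mul_add, Finset.sum_add_distrib]

theorem Ex_const_mul (a : ℝ) (X : (E → O) → ℝ) : Ex M (fun φ => a * X φ) = a * Ex M X := by
  simp only [Ex, Finset.mul_sum, mul_left_comm]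

theorem Ex_sum {ι : Type*} (s : Finset ι) (X : ι → (E → O) → ℝ) :
    Ex M (fun φ => ∑ i ∈ s, X i φ) = ∑ i ∈ s, Ex M (X i) := by
  simp only [Ex, Finset.mul_sum]
  exact Finset.sum_comm

theorem Ex_ite_const (P : (E → O) → Prop) [DecidablePred P] (a : ℝ) :
    Ex M (fun φ => if P φ then a else 0) = a * Pr M P := by
  simp only [Ex, Pr, Finset.mul_sum]
  exact Finset.sum_congr rfl fun φ _ => by by_cases h : P φ <;> simp [h, mul_comm]

theorem Pr_nonneg (P : (E → O) → Prop) : 0 ≤ Pr M P :=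
  Finset.sum_nonneg fun φ _ => by split_ifs <;> simp [M.p_nonneg φ]

theorem exists_p_pos : ∃ φ, 0 < M.p φ := by
  obtain ⟨φ, -, hφ⟩ := Finset.exists_lt_of_sum_lt (s := Finset.univ) (f := fun _ => 0) (g := M.p)
    (by simp [M.p_sum])
  exact ⟨φ, hφ⟩

theorem p_eq_prod_Pr (φ : E → O) : M.p φ = ∏ e, Pr M fun φ' => φ' e = φ e := by
  rw [M.indep φ]
  simp only [Pr]
  congr!

theorem sum_Pr_eval_eq (e : E) : ∑ o, Pr M (fun φ => φ e = o) = 1 := by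
  unfold Pr
  rw [Finset.sum_comm, ← M.p_sum]
  refine Finset.sum_congr rfl fun φ _ => ?_
  exact (Finset.sum_eq_single (φ e) (fun o _ ho => if_neg ho.symm) (by simp)).trans (if_pos rfl)

theorem p_update_mul (φ : E → O) (e : E) (o : O) :
    M.p (Function.update φ e o) * Pr M (fun φ' => φ' e = φ e) =
      M.p φ * Pr M fun φ' => φ' e = o := by
  have hrest : ∏ x ∈ Finset.univ.erase e, (Pr M fun φ' => φ' x = Function.update φ e o x) =
      ∏ x ∈ Finset.univ.erase e, Pr M fun φ' => φ' x = φ x :=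
    Finset.prod_congr rfl fun x hx => by
      rw [Function.update_of_ne (Finset.ne_of_mem_erase hx)]
  rw [p_eq_prod_Pr M φ, p_eq_prod_Pr M (Function.update φ e o),
    ← Finset.mul_prod_erase _ _ (Finset.mem_univ e), hrest, Function.update_self,
    ← Finset.mul_prod_erase _ (fun x => Pr M fun φ' => φ' x = φ x) (Finset.mem_univ e)]
  ring

theorem Ex_eq_sum_Pr_mul_Ex_update (e : E) (X : (E → O) → ℝ) :
    Ex M X = ∑ o, Pr M (fun φ => φ e = o) * Ex M fun φ => X (Function.update φ e o) := by
  -- Exchange the state of `e` with an independent sample of it.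
  let swap : (E → O) × O → (E → O) × O := fun x => (Function.update x.1 e x.2, x.1 e)
  have hswap : Function.Involutive swap := fun x => by simp [swap]
  calc Ex M X = ∑ x : (E → O) × O, M.p x.1 * (Pr M fun φ' => φ' e = x.2) * X x.1 := by
        simp only [Fintype.sum_prod_type, ← Finset.sum_mul, ← Finset.mul_sum, sum_Pr_eval_eq,
          mul_one, Ex]
    _ = ∑ x : (E → O) × O, M.p (swap x).1 * (Pr M fun φ' => φ' e = (swap x).2) * X (swap x).1 :=
        (Equiv.sum_comp hswap.toPerm _).symm
    _ = ∑ x : (E → O) × O,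
          M.p x.1 * (Pr M fun φ' => φ' e = x.2) * X (Function.update x.1 e x.2) :=
        Finset.sum_congr rfl fun x _ => by rw [p_update_mul]
    _ = ∑ o, Pr M (fun φ => φ e = o) * Ex M fun φ => X (Function.update φ e o) := by
        rw [Fintype.sum_prod_type_right]
        simp only [Ex, Finset.mul_sum, mul_left_comm, mul_assoc]

theorem Ex_ite_eval {e : E} {P : (E → O) → Prop} [DecidablePred P]
    (hP : ∀ φ o, P (Function.update φ e o) ↔ P φ) (B : O → ℝ) :
    Ex M (fun φ => if P φ then B (φ e) else 0) = Pr M P * Ex M fun φ => B (φ e) := by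
  rw [Ex_eq_sum_Pr_mul_Ex_update M e, Ex_eq_sum_Pr_mul_Ex_update M e fun φ => B (φ e),
    Finset.mul_sum]
  refine Finset.sum_congr rfl fun o _ => ?_
  simp only [hP, Function.update_self, Ex_ite_const, Ex_const]
  ring

theorem Ex_ite_Fm {e : E} {P : (E → O) → Prop} [DecidablePred P]
    (hP : ∀ φ o, P (Function.update φ e o) ↔ P φ) (ψ : Sub E O) :
    Ex M (fun φ => if P φ then Fm M ψ e φ else 0) = Pr M P * Ex M (Fm M ψ e) :=
  Ex_ite_eval M hP fun o => M.f (updateSub ψ e o) - M.f ψ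

end Expectation

section Utility

variable {M}

theorem Fm_of_mem_dom {ψ : Sub E O} {φ : E → O} (hψ : subext ψ (toSub φ)) {e : E}
    (he : ψ e ≠ none) : Fm M ψ e φ = 0 := by
  rw [Fm, updateSub_eq_self (eq_some_of_subext_toSub hψ he), sub_self]

theorem Fm_nonneg_of_notMem_dom {ψ : Sub E O} {e : E} (he : ψ e = none) (φ : E → O) :
    0 ≤ Fm M ψ e φ :=
  sub_nonneg.2 (M.f_mono _ _ (subext_updateSub he _))

theorem Fm_nonneg {ψ : Sub E O} {φ : E → O} (hψ : subext ψ (toSub φ)) (e : E) :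
    0 ≤ Fm M ψ e φ := by
  by_cases he : ψ e = none
  · exact Fm_nonneg_of_notMem_dom he φ
  · exact (Fm_of_mem_dom hψ he).ge

theorem Fm_anti {ψ ψ' : Sub E O} {φ : E → O} (hψ : subext ψ ψ') (hψ' : subext ψ' (toSub φ))
    (e : E) : Fm M ψ' e φ ≤ Fm M ψ e φ := by
  by_cases he : ψ' e = none
  · exact M.f_submod ψ ψ' e (φ e) hψ he
  · rw [Fm_of_mem_dom hψ' he]
    exact Fm_nonneg (hψ.trans hψ') e

theorem exists_subext_f_le_add_sum_Fm {ψ : Sub E O} {φ : E → O} (hψ : subext ψ (toSub φ))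
    (D : Finset E) : ∃ χ : Sub E O, subext ψ χ ∧ subext χ (toSub φ) ∧
      (∀ e ∈ D, χ e = some (φ e)) ∧ M.f χ ≤ M.f ψ + ∑ e ∈ D, Fm M ψ e φ := by
  induction D using Finset.induction_on with
  | empty => exact ⟨ψ, subext.refl ψ, hψ, by simp, by simp⟩
  | insert e D he ih =>
    obtain ⟨χ, hψχ, hχφ, hχD, hf⟩ := ih
    have hsub : subext χ (updateSub χ e (φ e)) := by
      by_cases h : χ e = none
      · exact subext_updateSub h _
      · rw [updateSub_eq_self (eq_some_of_subext_toSub hχφ h)]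
        exact subext.refl χ
    refine ⟨updateSub χ e (φ e), hψχ.trans hsub, updateSub_subext hχφ rfl, ?_, ?_⟩
    · exact Finset.forall_mem_insert _ _ _ |>.2
        ⟨updateSub_self χ e (φ e), fun x hx => hsub x _ (hχD x hx)⟩
    · have hanti : M.f (updateSub χ e (φ e)) - M.f χ ≤ Fm M ψ e φ := Fm_anti hψχ hχφ e
      rw [Finset.sum_insert he]
      linarith

theorem f_le_add_sum_Fm {ψ ρ : Sub E O} {φ : E → O} (hψ : subext ψ (toSub φ))
    (hρ : subext ρ (toSub φ)) {D : Finset E} (hD : ∀ e, ρ e ≠ none → e ∈ D) :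
    M.f ρ ≤ M.f ψ + ∑ e ∈ D, Fm M ψ e φ := by
  obtain ⟨χ, -, -, hχ, hf⟩ := exists_subext_f_le_add_sum_Fm (M := M) hψ D
  refine (M.f_mono ρ χ fun e o ho => ?_).trans hf
  have hdom : ρ e ≠ none := by simp [ho]
  rw [hχ e (hD e hdom), ← eq_some_of_subext_toSub hρ hdom, ho]

variable (M)

theorem f_le_Q (ψ : Sub E O) : M.f ψ ≤ M.Q := by
  obtain ⟨φ₀, -⟩ := exists_p_pos M
  obtain ⟨φ, hφ, -⟩ := exists_subext_toSub ψ φ₀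
  exact (M.f_mono _ _ hφ).trans_eq (M.f_cover φ)

variable {M}

theorem exists_Ex_Fm_pos {ψ : Sub E O} (hψ : M.f ψ < M.Q) :
    ∃ e, ψ e = none ∧ 0 < Ex M (Fm M ψ e) := by
  obtain ⟨φ, hφ⟩ := exists_p_pos M
  obtain ⟨φ', hφ', hagree⟩ := exists_subext_toSub ψ φ
  have hgap : M.Q ≤ M.f ψ + ∑ e, Fm M ψ e φ' := by
    rw [← M.f_cover φ']
    exact f_le_add_sum_Fm hφ' (subext.refl _) fun e _ => Finset.mem_univ e
  obtain ⟨e, -, he⟩ : ∃ e ∈ Finset.univ, 0 < Fm M ψ e φ' :=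
    Finset.exists_lt_of_sum_lt (f := fun _ => 0) (by simp only [Finset.sum_const_zero]; linarith)
  have hdom : ψ e = none := not_not.1 fun h => he.ne' (Fm_of_mem_dom hφ' h)
  have heφ : 0 < Fm M ψ e φ := by rwa [Fm, ← hagree e hdom]
  exact ⟨e, hdom, Finset.sum_pos'
    (fun φ'' _ => mul_nonneg (M.p_nonneg φ'') (Fm_nonneg_of_notMem_dom hdom φ''))
    ⟨φ, Finset.mem_univ φ, mul_pos hφ heφ⟩⟩

end Utility

section Execution

variable {M} {π : Sub E O → E}

theorem execAux_succ_of_lt {φ : E → O} {n : ℕ} (h : M.f (execAux M π φ n) < M.Q) :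
    execAux M π φ (n + 1) =
      updateSub (execAux M π φ n) (π (execAux M π φ n)) (φ (π (execAux M π φ n))) :=
  if_pos h

theorem execAux_succ_of_not_lt {φ : E → O} {n : ℕ} (h : ¬M.f (execAux M π φ n) < M.Q) :
    execAux M π φ (n + 1) = execAux M π φ n :=
  if_neg h

theorem execAux_subext_toSub (π : Sub E O → E) (φ : E → O) (n : ℕ) :
    subext (execAux M π φ n) (toSub φ) := by
  induction n with
  | zero => exact fun _ _ h => nomatch h
  | succ n ih =>
    by_cases h : M.f (execAux M π φ n) < M.Q
    · rw [execAux_succ_of_lt h]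
      exact updateSub_subext ih rfl
    · rwa [execAux_succ_of_not_lt h]

theorem execAux_subext_succ (hπ : IsPolicy M π) (φ : E → O) (n : ℕ) :
    subext (execAux M π φ n) (execAux M π φ (n + 1)) := by
  by_cases h : M.f (execAux M π φ n) < M.Q
  · rw [execAux_succ_of_lt h]
    exact subext_updateSub (hπ _ h) _
  · rw [execAux_succ_of_not_lt h]
    exact subext.refl _

theorem execAux_mono (hπ : IsPolicy M π) (φ : E → O) {m n : ℕ} (hmn : m ≤ n) :
    subext (execAux M π φ m) (execAux M π φ n) := by
  induction n, hmn using Nat.le_induction with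
  | base => exact subext.refl _
  | succ n _ ih => exact ih.trans (execAux_subext_succ hπ φ n)

theorem execAux_congr (hπ : IsPolicy M π) {φ φ' : E → O} {n : ℕ}
    (h : subext (execAux M π φ n) (toSub φ')) : execAux M π φ' n = execAux M π φ n := by
  induction n with
  | zero => rfl
  | succ n ih =>
    have hn := ih ((execAux_subext_succ hπ φ n).trans h)
    by_cases hlt : M.f (execAux M π φ n) < M.Q
    · have hstate : toSub φ' (π (execAux M π φ n)) = some (φ (π (execAux M π φ n))) :=
        h _ _ (by rw [execAux_succ_of_lt hlt, updateSub_self])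
      rw [execAux_succ_of_lt (hn.symm ▸ hlt), execAux_succ_of_lt hlt, hn, Option.some.inj hstate]
    · rw [execAux_succ_of_not_lt (hn.symm ▸ hlt), execAux_succ_of_not_lt hlt, hn]

theorem execAux_update (hπ : IsPolicy M π) {φ : E → O} {n : ℕ} {e : E}
    (h : execAux M π φ n e = none) (o : O) :
    execAux M π (Function.update φ e o) n = execAux M π φ n :=
  execAux_congr hπ (subext_toSub_update (execAux_subext_toSub π φ n) h o)

theorem execAux_update_eq_iff (hπ : IsPolicy M π) {ψ : Sub E O} {e : E} (hψ : ψ e = none)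
    (φ : E → O) (o : O) (n : ℕ) :
    execAux M π (Function.update φ e o) n = ψ ↔ execAux M π φ n = ψ := by
  constructor
  · intro h
    have hback := execAux_update hπ (h.symm ▸ hψ) (φ e)
    rwa [Function.update_idem, Function.update_eq_self, h] at hback
  · rintro rfl
    exact execAux_update hπ hψ o

theorem visits_update_iff (hπ : IsPolicy M π) {ψ : Sub E O} {e : E} (hψ : ψ e = none)
    (φ : E → O) (o : O) : visits M π (Function.update φ e o) ψ ↔ visits M π φ ψ :=
  exists_congr fun n => execAux_update_eq_iff hπ hψ φ o n

theorem mem_Ssel {φ : E → O} {e : E} : e ∈ Ssel M π φ ↔ cover M π φ e ≠ none := by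
  simp [Ssel]

theorem mem_Ssel_update_iff (hπ : IsPolicy M π) (φ : E → O) (e : E) (o : O) :
    e ∈ Ssel M π (Function.update φ e o) ↔ e ∈ Ssel M π φ := by
  simp only [mem_Ssel, not_iff_not, ne_eq]
  constructor <;> intro h
  · rwa [← (execAux_update_eq_iff hπ h φ o _).1 rfl] at h
  · rwa [cover, execAux_update hπ h]

theorem card_dom_execAux (hπ : IsPolicy M π) {φ : E → O} {n : ℕ}
    (h : M.f (execAux M π φ n) < M.Q) : #{e | execAux M π φ n e ≠ none} = n := by
  induction n with
  | zero => simp [execAux]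
  | succ n ih =>
    have hn : M.f (execAux M π φ n) < M.Q := (M.f_mono _ _ (execAux_subext_succ hπ φ n)).trans_lt h
    have hfresh := hπ _ hn
    have hdom : Finset.univ.filter (fun e => execAux M π φ (n + 1) e ≠ none) =
        insert (π (execAux M π φ n)) (Finset.univ.filter fun e => execAux M π φ n e ≠ none) := by
      ext e
      by_cases he : e = π (execAux M π φ n) <;> simp [execAux_succ_of_lt hn, updateSub, he]
    rw [hdom, Finset.card_insert_of_notMem (by simp [hfresh]), ih hn]

theorem cover_subext_toSub (π : Sub E O → E) (φ : E → O) : subext (cover M π φ) (toSub φ) :=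
  execAux_subext_toSub π φ _

theorem f_cover_eq_Q (hπ : IsPolicy M π) (φ : E → O) : M.f (cover M π φ) = M.Q := by
  refine (f_le_Q M _).antisymm (not_lt.1 fun hlt => hlt.ne ?_)
  have hdom : ∀ e, cover M π φ e ≠ none := by
    simpa [Finset.card_eq_iff_eq_univ, Finset.eq_univ_iff_forall, cover] using
      card_dom_execAux hπ hlt
  have hfull : cover M π φ = toSub φ :=
    funext fun e => eq_some_of_subext_toSub (cover_subext_toSub π φ) (hdom e)
  rw [hfull, M.f_cover]

theorem execAux_subext_cover (hπ : IsPolicy M π) (φ : E → O) (n : ℕ) :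
    subext (execAux M π φ n) (cover M π φ) := by
  rcases le_total n (Fintype.card E) with hn | hn
  · exact execAux_mono hπ φ hn
  · have hstable : execAux M π φ n = cover M π φ := by
      induction n, hn using Nat.le_induction with
      | base => rfl
      | succ n _ ih => rw [execAux_succ_of_not_lt (by simp [ih, f_cover_eq_Q hπ]), ih]
    exact hstable ▸ subext.refl _

theorem visits.subext_toSub {φ : E → O} {ψ : Sub E O} (h : visits M π φ ψ) :
    subext ψ (toSub φ) := by
  obtain ⟨n, rfl⟩ := h
  exact execAux_subext_toSub π φ n

theorem visits.next {φ : E → O} {ψ : Sub E O} (h : visits M π φ ψ) (hψ : M.f ψ < M.Q) :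
    visits M π φ (updateSub ψ (π ψ) (φ (π ψ))) := by
  obtain ⟨n, rfl⟩ := h
  exact ⟨n + 1, execAux_succ_of_lt hψ⟩

theorem visits.subext_or_next_subext (hπ : IsPolicy M π) {φ : E → O} {ψ ψ' : Sub E O}
    (h : visits M π φ ψ) (h' : visits M π φ ψ') (hψ : M.f ψ < M.Q) :
    subext ψ' ψ ∨ subext (updateSub ψ (π ψ) (φ (π ψ))) ψ' := by
  obtain ⟨n, rfl⟩ := h
  obtain ⟨n', rfl⟩ := h'
  rcases le_or_gt n' n with hn | hn
  · exact .inl (execAux_mono hπ φ hn)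
  · exact .inr (execAux_succ_of_lt hψ ▸ execAux_mono hπ φ hn)

theorem visits.eq_of_item_eq (hπ : IsPolicy M π) {φ : E → O} {ψ ψ' : Sub E O}
    (h : visits M π φ ψ) (h' : visits M π φ ψ') (hψ : M.f ψ < M.Q) (hψ' : M.f ψ' < M.Q)
    (heq : π ψ = π ψ') : ψ = ψ' := by
  have key : ∀ {χ χ' : Sub E O}, visits M π φ χ → visits M π φ χ' → M.f χ < M.Q →
      M.f χ' < M.Q → π χ = π χ' → subext χ' χ := by
    intro χ χ' hχ hχ' hlt hlt' heq
    refine (hχ.subext_or_next_subext hπ hχ' hlt).resolve_right fun hsub => ?_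
    have hnone := hsub.eq_none (hπ χ' hlt')
    rw [← heq, updateSub_self] at hnone
    exact nomatch hnone
  exact (key h' h hψ' hψ heq.symm).antisymm (key h h' hψ hψ' heq)

theorem exists_visits_of_execAux_ne_none {φ : E → O} {e : E} {n : ℕ}
    (h : execAux M π φ n e ≠ none) : ∃ ψ, visits M π φ ψ ∧ M.f ψ < M.Q ∧ π ψ = e := by
  induction n with
  | zero => exact absurd rfl h
  | succ n ih =>
    by_cases hlt : M.f (execAux M π φ n) < M.Q
    · by_cases he : π (execAux M π φ n) = e
      · exact ⟨_, ⟨n, rfl⟩, hlt, he⟩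
      · rw [execAux_succ_of_lt hlt, updateSub_of_ne (Ne.symm he)] at h
        exact ih h
    · exact ih (execAux_succ_of_not_lt hlt ▸ h)

theorem mem_Ssel_iff_exists_visits (hπ : IsPolicy M π) {φ : E → O} {e : E} :
    e ∈ Ssel M π φ ↔ ∃ ψ, visits M π φ ψ ∧ M.f ψ < M.Q ∧ π ψ = e := by
  rw [mem_Ssel]
  refine ⟨exists_visits_of_execAux_ne_none, ?_⟩
  rintro ⟨ψ, hψ, hlt, rfl⟩ hnone
  obtain ⟨n, hn⟩ := hψ.next hlt
  have hsub := execAux_subext_cover hπ φ n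
  rw [hn] at hsub
  have hnone' := hsub.eq_none hnone
  rw [updateSub_self] at hnone'
  exact nomatch hnone'

theorem Q_sub_f_le_sum_Fm (hπ : IsPolicy M π) {ψ : Sub E O} {φ : E → O}
    (hψ : subext ψ (toSub φ)) : M.Q - M.f ψ ≤ ∑ e ∈ Ssel M π φ, Fm M ψ e φ := by
  rw [sub_le_iff_le_add', ← f_cover_eq_Q hπ φ]
  exact f_le_add_sum_Fm hψ (cover_subext_toSub π φ) fun e he => mem_Ssel.2 he

theorem C_eq_sum_visits (hπ : IsPolicy M π) (φ : E → O) :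
    C M π φ = ∑ ψ with M.f ψ < M.Q, if visits M π φ ψ then M.c (π ψ) else 0 := by
  rw [C, ← Finset.sum_filter, Finset.filter_filter]
  symm
  refine Finset.sum_bij (fun ψ _ => π ψ) ?_ ?_ ?_ fun _ _ => rfl
  · intro ψ hψ
    obtain ⟨-, hlt, hvis⟩ := Finset.mem_filter.1 hψ
    exact (mem_Ssel_iff_exists_visits hπ).2 ⟨ψ, hvis, hlt, rfl⟩
  · intro ψ hψ ψ' hψ' heq
    obtain ⟨-, hlt, hvis⟩ := Finset.mem_filter.1 hψ
    obtain ⟨-, hlt', hvis'⟩ := Finset.mem_filter.1 hψ'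
    exact hvis.eq_of_item_eq hπ hvis' hlt hlt' heq
  · intro e he
    obtain ⟨ψ, hvis, hlt, rfl⟩ := (mem_Ssel_iff_exists_visits hπ).1 he
    exact ⟨ψ, Finset.mem_filter.2 ⟨Finset.mem_univ ψ, hlt, hvis⟩, rfl⟩

theorem Ex_C_eq_sum_visits (hπ : IsPolicy M π) :
    Ex M (C M π) = ∑ ψ with M.f ψ < M.Q, M.c (π ψ) * Pr M fun φ => visits M π φ ψ := by
  rw [funext (C_eq_sum_visits hπ), Ex_sum]
  simp only [Ex_ite_const]

end Execution

section Revenue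

variable {M} {α : ℝ} {σ π : Sub E O → E}

theorem IsGreedy.Ex_Fm_pos (hσ : IsGreedy M α σ) {ψ : Sub E O} (hψ : M.f ψ < M.Q) :
    0 < Ex M (Fm M ψ (σ ψ)) := by
  obtain ⟨e, he, hpos⟩ := exists_Ex_Fm_pos hψ
  have hgreedy := (mul_pos (M.c_pos (σ ψ)) hpos).trans_le (hσ.2 ψ hψ e he)
  exact (Ex_nonneg (Fm_nonneg_of_notMem_dom (hσ.1 ψ hψ))).lt_of_ne'
    (right_ne_zero_of_mul hgreedy.ne')

theorem IsGreedy.one_le (hσ : IsGreedy M α σ) : 1 ≤ α := by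
  let ψ : Sub E O := fun _ => none
  have hψ : M.f ψ < M.Q := M.f_empty.trans_lt M.Q_pos
  have hcost : 0 < M.c (σ ψ) * Ex M (Fm M ψ (σ ψ)) := mul_pos (M.c_pos _) (hσ.Ex_Fm_pos hψ)
  have hgreedy := hσ.2 ψ hψ (σ ψ) rfl
  rw [mul_assoc] at hgreedy
  exact one_le_of_le_mul_right₀ hcost hgreedy

theorem IsGreedy.price_nonneg (hσ : IsGreedy M α σ) {ψ : Sub E O} (hψ : M.f ψ < M.Q) :
    0 ≤ price M ψ (σ ψ) :=
  div_nonneg (M.c_pos _).le (hσ.Ex_Fm_pos hψ).le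

theorem IsGreedy.price_mul_Ex_Fm (hσ : IsGreedy M α σ) {ψ : Sub E O} (hψ : M.f ψ < M.Q) :
    price M ψ (σ ψ) * Ex M (Fm M ψ (σ ψ)) = M.c (σ ψ) :=
  div_mul_cancel₀ _ (hσ.Ex_Fm_pos hψ).ne'

theorem IsGreedy.price_mul_Ex_Fm_le (hσ : IsGreedy M α σ) {ψ : Sub E O} (hψ : M.f ψ < M.Q)
    {e : E} (he : ψ e = none) : price M ψ (σ ψ) * Ex M (Fm M ψ e) ≤ α * M.c e := by
  rw [price, div_mul_eq_mul_div, div_le_iff₀ (hσ.Ex_Fm_pos hψ)]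
  exact hσ.2 ψ hψ e he

theorem mu_of_notMem_Ssel {φ : E → O} {e : E} (he : e ∉ Ssel M σ φ) :
    mu M σ π e φ = if e ∈ Ssel M π φ then M.c e else 0 := by
  simp only [mu, he, if_false]

theorem sum_ite_selects (hσ : IsPolicy M σ) {φ : E → O} {ψ : Sub E O} (hvis : visits M σ φ ψ)
    (hψ : M.f ψ < M.Q) (X : Sub E O → ℝ) :
    ∑ ψ', (if visits M σ φ ψ' ∧ M.f ψ' < M.Q ∧ σ ψ' = σ ψ then X ψ' else 0) = X ψ := by
  rw [Finset.sum_eq_single ψ _ (by simp), if_pos ⟨hvis, hψ, rfl⟩]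
  intro ψ' _ hne
  exact if_neg fun ⟨hvis', hψ', heq⟩ => hne (hvis'.eq_of_item_eq hσ hvis hψ' hψ heq)

theorem mu_of_visits (hσ : IsPolicy M σ) {φ : E → O} {ψ : Sub E O} (hvis : visits M σ φ ψ)
    (hψ : M.f ψ < M.Q) : mu M σ π (σ ψ) φ =
      if σ ψ ∈ Ssel M π φ then price M ψ (σ ψ) * Fm M ψ (σ ψ) φ else 0 := by
  have hsel : σ ψ ∈ Ssel M σ φ := (mem_Ssel_iff_exists_visits hσ).2 ⟨ψ, hvis, hψ, rfl⟩
  rw [mu, if_pos hsel, sum_ite_selects hσ hvis hψ]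

theorem mu_nonneg (hσ : IsGreedy M α σ) (e : E) (φ : E → O) : 0 ≤ mu M σ π e φ := by
  by_cases he : e ∈ Ssel M σ φ
  · obtain ⟨ψ, hvis, hψ, rfl⟩ := (mem_Ssel_iff_exists_visits hσ.1).1 he
    rw [mu_of_visits hσ.1 hvis hψ]
    exact ite_nonneg (mul_nonneg (hσ.price_nonneg hψ) (Fm_nonneg hvis.subext_toSub _)) le_rfl
  · rw [mu_of_notMem_Ssel he]
    exact ite_nonneg (M.c_pos e).le le_rfl

theorem muStar_nonneg (hσ : IsGreedy M α σ) (φ : E → O) : 0 ≤ muStar M σ π φ :=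
  Finset.sum_nonneg fun e _ => mu_nonneg hσ e φ

theorem mu_eq_cost_add_excess (hσ : IsPolicy M σ) (e : E) (φ : E → O) :
    mu M σ π e φ = if e ∈ Ssel M π φ then
      M.c e + ∑ ψ, if visits M σ φ ψ ∧ M.f ψ < M.Q ∧ σ ψ = e then
        price M ψ e * Fm M ψ e φ - M.c e else 0
      else 0 := by
  by_cases he : e ∈ Ssel M σ φ
  · obtain ⟨ψ, hvis, hψ, rfl⟩ := (mem_Ssel_iff_exists_visits hσ).1 he
    rw [mu_of_visits hσ hvis hψ, sum_ite_selects hσ hvis hψ, add_sub_cancel]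
  · rw [mu_of_notMem_Ssel he, Finset.sum_eq_zero, add_zero]
    exact fun ψ _ => if_neg fun h => he ((mem_Ssel_iff_exists_visits hσ).2 ⟨ψ, h⟩)

theorem Ex_ite_excess (hσ : IsGreedy M α σ) {e : E} {P : (E → O) → Prop} [DecidablePred P]
    (hP : ∀ φ o, P (Function.update φ e o) ↔ P φ) (ψ : Sub E O) :
    Ex M (fun φ => if P φ ∧ visits M σ φ ψ ∧ M.f ψ < M.Q ∧ σ ψ = e then
      price M ψ e * Fm M ψ e φ - M.c e else 0) = 0 := by
  by_cases h : M.f ψ < M.Q ∧ σ ψ = e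
  · obtain ⟨hψ, rfl⟩ := h
    let A : (E → O) → Prop := fun φ => P φ ∧ visits M σ φ ψ ∧ M.f ψ < M.Q ∧ σ ψ = σ ψ
    have hA : ∀ φ o, A (Function.update φ (σ ψ) o) ↔ A φ := fun φ o => by
      simp only [A, hP, visits_update_iff hσ.1 (hσ.1 ψ hψ)]
    have hzero : Ex M (fun φ => price M ψ (σ ψ) * Fm M ψ (σ ψ) φ - M.c (σ ψ)) = 0 := by
      simp only [sub_eq_add_neg, Ex_add, Ex_const_mul, Ex_const, hσ.price_mul_Ex_Fm hψ,
        add_neg_cancel]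
    have hindep := Ex_ite_eval M hA fun o =>
      price M ψ (σ ψ) * (M.f (updateSub ψ (σ ψ) o) - M.f ψ) - M.c (σ ψ)
    exact hindep.trans (mul_eq_zero_of_right _ hzero)
  · simp only [h, and_false, if_false, Ex_const]

theorem Ex_ite_mu (hσ : IsGreedy M α σ) (hπ : IsPolicy M π) {e : E} {P : (E → O) → Prop}
    [DecidablePred P] (hP : ∀ φ o, P (Function.update φ e o) ↔ P φ) :
    Ex M (fun φ => if P φ then mu M σ π e φ else 0) =
      M.c e * Pr M fun φ => P φ ∧ e ∈ Ssel M π φ := by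
  have hexcess (ψ : Sub E O) := Ex_ite_excess hσ (P := fun φ => P φ ∧ e ∈ Ssel M π φ)
    (fun φ o => by rw [hP, mem_Ssel_update_iff hπ]) ψ
  have hsplit : (fun φ => if P φ then mu M σ π e φ else 0) = fun φ =>
      (if P φ ∧ e ∈ Ssel M π φ then M.c e else 0) + ∑ ψ,
        if (P φ ∧ e ∈ Ssel M π φ) ∧ visits M σ φ ψ ∧ M.f ψ < M.Q ∧ σ ψ = e then
          price M ψ e * Fm M ψ e φ - M.c e else 0 := by
    funext φ
    rw [mu_eq_cost_add_excess hσ.1, ← ite_and]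
    by_cases h : P φ ∧ e ∈ Ssel M π φ
    · simp only [h, and_self, if_true, true_and]
    · simp only [h, false_and, if_false, Finset.sum_const_zero, add_zero]
  rw [hsplit, Ex_add, Ex_ite_const, Ex_sum, Finset.sum_eq_zero fun ψ _ => hexcess ψ, add_zero]

theorem Ex_muStar (hσ : IsGreedy M α σ) (hπ : IsPolicy M π) :
    Ex M (muStar M σ π) = Ex M (C M π) := by
  have hC : C M π = fun φ => ∑ e, if e ∈ Ssel M π φ then M.c e else 0 :=
    funext fun φ => by simp only [C, Finset.sum_ite_mem, Finset.univ_inter]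
  have hmu : ∀ e, Ex M (mu M σ π e) = M.c e * Pr M fun φ => e ∈ Ssel M π φ := fun e => by
    simpa only [if_true, true_and] using Ex_ite_mu hσ hπ (P := fun _ => True) fun _ _ => Iff.rfl
  unfold muStar
  rw [hC, Ex_sum, Ex_sum]
  exact Finset.sum_congr rfl fun e _ => by rw [hmu, Ex_ite_const]

end Revenue

section Markers

variable {M} {α b : ℝ} {σ π : Sub E O → E}

theorem leadsTo_iff_crosses (hσ : IsPolicy M σ) (hb : b < M.Q) {ψ : Sub E O} {φ : E → O} :
    leadsTo M σ b ψ φ ↔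
      visits M σ φ ψ ∧ M.f ψ ≤ b ∧ b < M.f (updateSub ψ (σ ψ) (φ (σ ψ))) := by
  constructor
  · rintro ⟨hvis, hle, hlast⟩
    have hψ := hle.trans_lt hb
    refine ⟨hvis, hle, not_le.1 fun hnext => ?_⟩
    have hnone := (hlast _ (hvis.next hψ) hnext).eq_none (hσ ψ hψ)
    rw [updateSub_self] at hnone
    exact nomatch hnone
  · rintro ⟨hvis, hle, hcross⟩
    refine ⟨hvis, hle, fun ψ' hvis' hle' => ?_⟩
    refine (hvis.subext_or_next_subext hσ hvis' (hle.trans_lt hb)).resolve_right fun hsub => ?_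
    exact ((M.f_mono _ _ hsub).trans hle').not_gt hcross

theorem leadsTo_unique {ψ ψ' : Sub E O} {φ : E → O} (h : leadsTo M σ b ψ φ)
    (h' : leadsTo M σ b ψ' φ) : ψ = ψ' :=
  (h'.2.2 ψ h.1 h.2.1).antisymm (h.2.2 ψ' h'.1 h'.2.1)

theorem leadsTo_update_iff (hσ : IsPolicy M σ) (hb : b < M.Q) {ψ : Sub E O} {e : E}
    (he : ψ e = none) (hne : σ ψ ≠ e) (φ : E → O) (o : O) :
    leadsTo M σ b ψ (Function.update φ e o) ↔ leadsTo M σ b ψ φ := by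
  rw [leadsTo_iff_crosses hσ hb, leadsTo_iff_crosses hσ hb, visits_update_iff hσ he,
    Function.update_of_ne hne]

theorem sum_ite_leadsTo_le {φ : E → O} {x : ℝ} (hx : 0 ≤ x) :
    ∑ ψ, (if leadsTo M σ b ψ φ then x else 0) ≤ x := by
  by_cases h : ∃ ψ, leadsTo M σ b ψ φ
  · obtain ⟨ψ, hψ⟩ := h
    rw [Finset.sum_eq_single ψ (fun ψ' _ hne => if_neg fun h' => hne (leadsTo_unique h' hψ))
      (by simp), if_pos hψ]
  · rw [Finset.sum_eq_zero fun ψ _ => if_neg fun hψ => h ⟨ψ, hψ⟩]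
    exact hx

theorem Q_sub_mul_Pr_leadsTo_le (hπ : IsPolicy M π) (ψ : Sub E O) :
    (M.Q - b) * Pr M (leadsTo M σ b ψ) ≤ ∑ e, Ex M fun φ =>
      if leadsTo M σ b ψ φ ∧ e ∈ Ssel M π φ then Fm M ψ e φ else 0 := by
  rw [← Ex_sum, ← Ex_ite_const]
  refine Ex_mono fun φ => ?_
  by_cases h : leadsTo M σ b ψ φ
  · simp only [h, if_true, true_and, Finset.sum_ite_mem, Finset.univ_inter]
    exact (sub_le_sub_left h.2.1 _).trans (Q_sub_f_le_sum_Fm hπ h.1.subext_toSub)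
  · simp only [h, if_false, false_and, Finset.sum_const_zero, le_refl]

theorem price_mul_Ex_Fm_le_Ex_mu (hσ : IsGreedy M α σ) (hπ : IsPolicy M π) (hb : b < M.Q)
    {ψ : Sub E O} (hψ : M.f ψ ≤ b) (e : E) :
    (price M ψ (σ ψ) * Ex M fun φ =>
        if leadsTo M σ b ψ φ ∧ e ∈ Ssel M π φ then Fm M ψ e φ else 0) ≤
      α * Ex M fun φ => if leadsTo M σ b ψ φ then mu M σ π e φ else 0 := by
  have hψQ := hψ.trans_lt hb
  have hrev : 0 ≤ Ex M fun φ => if leadsTo M σ b ψ φ then mu M σ π e φ else 0 :=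
    Ex_nonneg fun φ => ite_nonneg (mu_nonneg hσ e φ) le_rfl
  by_cases he : ψ e = none
  · by_cases hsel : σ ψ = e
    · subst hsel
      have heq : (fun φ => price M ψ (σ ψ) *
          if leadsTo M σ b ψ φ ∧ σ ψ ∈ Ssel M π φ then Fm M ψ (σ ψ) φ else 0) =
          fun φ => if leadsTo M σ b ψ φ then mu M σ π (σ ψ) φ else 0 := by
        funext φ
        by_cases h : leadsTo M σ b ψ φ
        · simp only [h, true_and, if_true, mu_of_visits hσ.1 h.1 hψQ, mul_ite, mul_zero]
        · simp only [h, false_and, if_false, mul_zero]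
      rw [← Ex_const_mul, heq]
      exact le_mul_of_one_le_left hrev hσ.one_le
    · have hL := leadsTo_update_iff hσ.1 hb he hsel
      have hindep := Ex_ite_Fm M (P := fun φ => leadsTo M σ b ψ φ ∧ e ∈ Ssel M π φ)
        (fun φ o => by rw [hL, mem_Ssel_update_iff hπ]) ψ
      rw [hindep, Ex_ite_mu hσ hπ hL, mul_left_comm, mul_comm, ← mul_assoc]
      exact mul_le_mul_of_nonneg_right (hσ.price_mul_Ex_Fm_le hψQ he) (Pr_nonneg M _)
  · have hzero : ∀ φ, (if leadsTo M σ b ψ φ ∧ e ∈ Ssel M π φ then Fm M ψ e φ else 0) = 0 :=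
      fun φ => ite_eq_right_iff.2 fun h => Fm_of_mem_dom h.1.1.subext_toSub he
    simp only [hzero, Ex_const, mul_zero]
    exact mul_nonneg (zero_le_one.trans hσ.one_le) hrev

theorem Q_sub_mul_price_mul_Pr_leadsTo_le (hσ : IsGreedy M α σ) (hπ : IsPolicy M π)
    (hb : b < M.Q) (ψ : Sub E O) :
    (M.Q - b) * (price M ψ (σ ψ) * Pr M (leadsTo M σ b ψ)) ≤
      α * Ex M fun φ => if leadsTo M σ b ψ φ then muStar M σ π φ else 0 := by
  by_cases hψ : M.f ψ ≤ b
  · have hsum : (Ex M fun φ => if leadsTo M σ b ψ φ then muStar M σ π φ else 0) =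
        ∑ e, Ex M fun φ => if leadsTo M σ b ψ φ then mu M σ π e φ else 0 := by
      rw [← Ex_sum]
      exact congrArg (Ex M) (funext fun φ => by split_ifs <;> simp [muStar])
    rw [hsum, mul_left_comm, Finset.mul_sum]
    refine (mul_le_mul_of_nonneg_left (Q_sub_mul_Pr_leadsTo_le hπ ψ)
      (hσ.price_nonneg (hψ.trans_lt hb))).trans ?_
    rw [Finset.mul_sum]
    exact Finset.sum_le_sum fun e _ => price_mul_Ex_Fm_le_Ex_mu hσ hπ hb hψ e
  · have hnot : ∀ φ, ¬leadsTo M σ b ψ φ := fun φ h => hψ h.2.1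
    simp [Pr, hnot]

theorem Ex_lam (σ : Sub E O → E) (b ε : ℝ) :
    Ex M (lam M σ b ε) = ∑ ψ, price M ψ (σ ψ) * ε * Pr M (leadsTo M σ b ψ) := by
  unfold lam
  rw [Ex_sum]
  exact Finset.sum_congr rfl fun ψ _ => Ex_ite_const M _ _

theorem Ex_lam_le (hσ : IsGreedy M α σ) (hπ : IsPolicy M π) (hb : b < M.Q) {ε : ℝ}
    (hε : 0 ≤ ε) : Ex M (lam M σ b ε) ≤ α * (ε / (M.Q - b)) * Ex M (C M π) := by
  have hunit : (M.Q - b) * ∑ ψ, price M ψ (σ ψ) * Pr M (leadsTo M σ b ψ) ≤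
      α * Ex M (C M π) :=
    calc (M.Q - b) * ∑ ψ, price M ψ (σ ψ) * Pr M (leadsTo M σ b ψ)
        ≤ ∑ ψ, α * Ex M fun φ => if leadsTo M σ b ψ φ then muStar M σ π φ else 0 := by
          rw [Finset.mul_sum]
          exact Finset.sum_le_sum fun ψ _ => Q_sub_mul_price_mul_Pr_leadsTo_le hσ hπ hb ψ
      _ = α * Ex M fun φ => ∑ ψ, if leadsTo M σ b ψ φ then muStar M σ π φ else 0 := by
          rw [← Finset.mul_sum, Ex_sum]
      _ ≤ α * Ex M (muStar M σ π) :=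
          mul_le_mul_of_nonneg_left (Ex_mono fun φ => sum_ite_leadsTo_le (muStar_nonneg hσ φ))
            (zero_le_one.trans hσ.one_le)
      _ = α * Ex M (C M π) := by rw [Ex_muStar hσ hπ]
  calc Ex M (lam M σ b ε) = ε * ∑ ψ, price M ψ (σ ψ) * Pr M (leadsTo M σ b ψ) := by
        rw [Ex_lam, Finset.mul_sum]
        exact Finset.sum_congr rfl fun ψ _ => by ring
    _ ≤ ε * (α * Ex M (C M π) / (M.Q - b)) :=
        mul_le_mul_of_nonneg_left ((le_div_iff₀' (sub_pos.2 hb)).2 hunit) hε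
    _ = α * (ε / (M.Q - b)) * Ex M (C M π) := by ring

end Markers

section Levels

theorem sum_range_ite_Ico_succ_sub {G : Type*} [AddCommGroup G] [Preorder G] {v : ℕ → G}
    (hv : StrictMono v) {a b m : ℕ} (hab : a ≤ b) (hbm : b ≤ m) :
    ∑ i ∈ Finset.range m, (if v a ≤ v i ∧ v i < v b then v (i + 1) - v i else 0) =
      v b - v a := by
  have hcells : (Finset.range m).filter (fun i => a ≤ i ∧ i < b) = Finset.Ico a b := by
    ext i
    simp only [Finset.mem_filter, Finset.mem_range, Finset.mem_Ico]
    omega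
  simp only [hv.le_iff_le, hv.lt_iff_lt]
  rw [← Finset.sum_filter, hcells, Finset.sum_Ico_sub v hab]

variable {M} {α : ℝ} {σ π : Sub E O → E} {v : ℕ → ℝ} {m : ℕ}

theorem sum_leadsTo_increments (hσ : IsPolicy M σ) (hv : StrictMono v)
    (hf : ∀ ψ, ∃ k, M.f ψ = v k) (hm : M.Q = v m) {ψ : Sub E O} (hψ : M.f ψ < M.Q)
    (φ : E → O) :
    ∑ i ∈ Finset.range m, (if leadsTo M σ (v i) ψ φ then v (i + 1) - v i else 0) =
      if visits M σ φ ψ then Fm M ψ (σ ψ) φ else 0 := by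
  have hcross : ∀ i ∈ Finset.range m, (leadsTo M σ (v i) ψ φ ↔ visits M σ φ ψ ∧ M.f ψ ≤ v i ∧
      v i < M.f (updateSub ψ (σ ψ) (φ (σ ψ)))) := fun i hi =>
    leadsTo_iff_crosses hσ (hm ▸ hv (Finset.mem_range.1 hi))
  rw [Finset.sum_congr rfl fun i hi => if_congr (hcross i hi) rfl rfl]
  by_cases hvis : visits M σ φ ψ
  · obtain ⟨a, ha⟩ := hf ψ
    obtain ⟨b, hb⟩ := hf (updateSub ψ (σ ψ) (φ (σ ψ)))
    have hab : a ≤ b := by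
      rw [← hv.le_iff_le, ← ha, ← hb]
      exact M.f_mono _ _ (subext_updateSub (hσ ψ hψ) _)
    have hbm : b ≤ m := by
      rw [← hv.le_iff_le, ← hb, ← hm]
      exact f_le_Q M _
    simp only [hvis, true_and, if_true, Fm, ha, hb]
    exact sum_range_ite_Ico_succ_sub hv hab hbm
  · simp only [hvis, false_and, if_false, Finset.sum_const_zero]

theorem Ex_C_eq_sum_Ex_lam (hσ : IsGreedy M α σ) (hv : StrictMono v)
    (hf : ∀ ψ, ∃ k, M.f ψ = v k) (hm : M.Q = v m) :
    Ex M (C M σ) = ∑ i ∈ Finset.range m, Ex M (lam M σ (v i) (v (i + 1) - v i)) := by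
  have hnode : ∀ ψ : Sub E O, M.f ψ < M.Q → M.c (σ ψ) * (Pr M fun φ => visits M σ φ ψ) =
      ∑ i ∈ Finset.range m,
        price M ψ (σ ψ) * (v (i + 1) - v i) * Pr M (leadsTo M σ (v i) ψ) := by
    intro ψ hψ
    have hindep := Ex_ite_Fm M (P := fun φ => visits M σ φ ψ)
      (visits_update_iff hσ.1 (hσ.1 ψ hψ)) ψ
    simp only [← sum_leadsTo_increments hσ.1 hv hf hm hψ, Ex_sum, Ex_ite_const] at hindep
    simp only [mul_assoc, ← Finset.mul_sum]
    rw [hindep, mul_comm (Pr M _), ← mul_assoc, hσ.price_mul_Ex_Fm hψ]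
  have hleaf : ∀ ψ : Sub E O, ¬M.f ψ < M.Q → ∀ i ∈ Finset.range m,
      Pr M (leadsTo M σ (v i) ψ) = 0 := by
    intro ψ hψ i hi
    have hnot : ∀ φ, ¬leadsTo M σ (v i) ψ φ := fun φ h =>
      hψ (h.2.1.trans_lt (hm ▸ hv (Finset.mem_range.1 hi)))
    simp [Pr, hnot]
  simp only [Ex_lam]
  rw [Finset.sum_comm, Ex_C_eq_sum_visits hσ.1, Finset.sum_filter]
  refine Finset.sum_congr rfl fun ψ _ => ?_
  split_ifs with hψ
  · exact hnode ψ hψ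
  · exact (Finset.sum_eq_zero fun i hi => by rw [hleaf ψ hψ i hi, mul_zero]).symm

theorem sum_Icc_one_div_eq_sum_range (n : ℕ) :
    ∑ j ∈ Finset.Icc 1 n, (1 : ℝ) / j = ∑ i ∈ Finset.range n, 1 / ((n : ℝ) - i) := by
  refine Finset.sum_nbij' (n - ·) (n - ·) ?_ ?_ ?_ ?_ ?_ <;>
    simp only [Finset.mem_Icc, Finset.mem_range]
  iterate 4 omega
  rintro j ⟨-, hj⟩
  rw [Nat.cast_sub hj, sub_sub_cancel]

end Levels

theorem greedy_approx_int_general (M : Problem E O) {α : ℝ} {σ π : Sub E O → E}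
    (hσ : IsGreedy M α σ) (hπ : IsPolicy M π) {v : ℕ → ℝ} (hv : StrictMono v)
    (hf : ∀ ψ, ∃ k, M.f ψ = v k) {m : ℕ} (hm : M.Q = v m) :
    Ex M (C M σ) ≤
      α * (∑ i ∈ Finset.range m, (v (i + 1) - v i) / (M.Q - v i)) * Ex M (C M π) := by
  rw [Ex_C_eq_sum_Ex_lam hσ hv hf hm, Finset.mul_sum, Finset.sum_mul]
  refine Finset.sum_le_sum fun i hi => Ex_lam_le hσ hπ ?_ (sub_nonneg.2 (hv i.lt_succ_self).le)
  exact hm ▸ hv (Finset.mem_range.1 hi)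

/-- If the utility function is integer valued (with integer goal value
`Qn`), the α-approximate adaptive greedy policy achieves approximation factor
`α · H(Qn)`, where `H` is the harmonic number. -/
theorem greedy_approx_int
    (M : Problem E O) (α : ℝ) (hα : 1 ≤ α)
    (σ : Sub E O → E) (hσ : IsGreedy M α σ)
    (πs : Sub E O → E) (hπs : IsOptimal M πs)
    (hint : ∀ ψ : Sub E O, ∃ k : ℕ, M.f ψ = k)
    (Qn : ℕ) (hQn : M.Q = Qn) :
    Ex M (C M σ) ≤ α * (∑ j ∈ Finset.Icc 1 Qn, (1 : ℝ) / j) * Ex M (C M πs) := by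
  simpa only [sum_Icc_one_div_eq_sum_range, hQn, Nat.cast_succ, add_sub_cancel_left] using
    greedy_approx_int_general M hσ hπs.1 Nat.strictMono_cast hint hQn

end
end SSC
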